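/- For any Borel probability measures μ, ν, κ on X and any p ≥ 1 and k ≥ 0, the (p,k)-RPW distance satisfies the triangle inequality: RPW_{p,k}(μ, ν) ≤ RPW_{p,k}(μ, κ) + RPW_{p,k}(κ, ν). -/

import Mathlib

open MeasureTheory

noncomputable section

/-- `γ` is an `α`-partial transport plan from `μ` to `ν`: a Borel measure on `X × X` of
total mass `α` whose first marginal is dominated by `μ` and second marginal by `ν`. -/
def IsPartialPlan {X : Type*} [MeasurableSpace X] (μ ν : Measure X) (α : ℝ)
    (γ : Measure (X × X)) : Prop :=
  γ Set.univ = ENNReal.ofReal α ∧ γ.map Prod.fst ≤ μ ∧ γ.map Prod.snd ≤ ν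

/-- The cost `w_p(γ) = (∫ c(x,y)^p dγ)^(1/p)` of a transport plan. -/
def planCost {X : Type*} [MetricSpace X] [MeasurableSpace X] (p : ℝ)
    (γ : Measure (X × X)) : ℝ :=
  (∫ z, dist z.1 z.2 ^ p ∂γ) ^ (1 / p)

/-- The `α`-partial `p`-Wasserstein distance `W_{p,α}(μ, ν)`. -/
def partialW {X : Type*} [MetricSpace X] [MeasurableSpace X] (p α : ℝ)
    (μ ν : Measure X) : ℝ :=
  sInf { c : ℝ | ∃ γ : Measure (X × X), IsPartialPlan μ ν α γ ∧ c = planCost p γ }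

/-- The `(p,k)`-RPW distance: the least `ε ∈ [0,1]` with `W_{p,1-ε}(μ,ν) ≤ kε`. -/
def RPW {X : Type*} [MetricSpace X] [MeasurableSpace X] (p k : ℝ)
    (μ ν : Measure X) : ℝ :=
  sInf { ε : ℝ | ε ∈ Set.Icc (0:ℝ) 1 ∧ partialW p (1 - ε) μ ν ≤ k * ε }

/-! Near-optimal plans `γ₁` from `μ` to `κ` of mass `1 - ε₁` and `γ₂` from `κ` to `ν` of mass
`1 - ε₂` have marginals on the intermediate space that both lie below `κ`, so these marginals
share a part of mass at least `1 - (ε₁ + ε₂)`. Gluing `γ₁` and `γ₂` along this common part gives a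
plan from `μ` to `ν`, whose cost is bounded by Minkowski's inequality; hence `ε₁ + ε₂` is
admissible for the pair `(μ, ν)`. -/

section Measure

open ProbabilityTheory

variable {X Y Z : Type*} [MeasurableSpace X] [MeasurableSpace Y] [MeasurableSpace Z]

theorem compProd_mono_left {μ ν : Measure X} [SFinite μ] [SFinite ν] (h : μ ≤ ν)
    (K : Kernel X Y) [IsSFiniteKernel K] : μ ⊗ₘ K ≤ ν ⊗ₘ K := by
  refine Measure.le_iff.2 fun s hs => ?_
  rw [Measure.compProd_apply hs, Measure.compProd_apply hs]
  exact lintegral_mono' h le_rfl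

theorem exists_le_measure_univ_eq {μ : Measure X} [IsFiniteMeasure μ] {m : ENNReal}
    (hm : m ≤ μ Set.univ) : ∃ ν ≤ μ, ν Set.univ = m := by
  have hratio : m / μ Set.univ ≤ 1 := ENNReal.div_le_of_le_mul (by rwa [one_mul])
  refine ⟨(m / μ Set.univ) • μ, Measure.le_iff.2 fun s _ => ?_, ?_⟩
  · exact mul_le_of_le_one_left zero_le hratio
  · refine ENNReal.div_mul_cancel' (fun h0 => ?_) fun htop => absurd htop (measure_ne_top _ _)
    exact le_zero_iff.1 (hm.trans_eq h0)

theorem exists_le_le_measure_univ_add_le {κ κ₁ κ₂ : Measure X} [IsFiniteMeasure κ]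
    (h₁ : κ₁ ≤ κ) (h₂ : κ₂ ≤ κ) :
    ∃ l ≤ κ₁, l ≤ κ₂ ∧ κ₁ Set.univ + κ₂ Set.univ ≤ l Set.univ + κ Set.univ := by
  have : IsFiniteMeasure κ₁ := isFiniteMeasure_of_le κ h₁
  have : IsFiniteMeasure κ₂ := isFiniteMeasure_of_le κ h₂
  have hsplit : κ - κ₂ + κ₂ = κ := Measure.sub_add_cancel_of_le h₂
  have hcover : κ₁ ≤ κ₁ - (κ - κ₂) + (κ - κ₂) := Measure.sub_le_iff_le_add.1 le_rfl
  refine ⟨κ₁ - (κ - κ₂), Measure.sub_le, Measure.sub_le_of_le_add ?_, ?_⟩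
  · rwa [add_comm, hsplit]
  · calc κ₁ Set.univ + κ₂ Set.univ
        ≤ (κ₁ - (κ - κ₂) + (κ - κ₂)) Set.univ + κ₂ Set.univ := by gcongr
      _ = (κ₁ - (κ - κ₂)) Set.univ + (κ - κ₂ + κ₂) Set.univ := by
          simp only [Measure.add_apply, add_assoc]
      _ = (κ₁ - (κ - κ₂)) Set.univ + κ Set.univ := by rw [hsplit]

theorem exists_glue_le [StandardBorelSpace X] [Nonempty X] [StandardBorelSpace Z] [Nonempty Z]
    {γ₁ : Measure (X × Y)} {γ₂ : Measure (Y × Z)} [IsFiniteMeasure γ₁] [IsFiniteMeasure γ₂]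
    {l : Measure Y} (h₁ : l ≤ γ₁.snd) (h₂ : l ≤ γ₂.fst) :
    ∃ T : Measure (X × Y × Z), T.map (fun t => (t.1, t.2.1)) ≤ γ₁ ∧ T.map Prod.snd ≤ γ₂ ∧
      T.map (fun t => t.2.1) = l := by
  have : IsFiniteMeasure l := isFiniteMeasure_of_le _ h₁
  -- The coordinates in `X` and `Z` are made conditionally independent given the one in `Y`.
  let K₁ := (γ₁.map Prod.swap).condKernel
  let K₂ := γ₂.condKernel
  let T : Measure (Y × X × Z) := l ⊗ₘ (K₁ ×ₖ K₂)
  have hYX : T.map (Prod.map id Prod.fst) ≤ γ₁.map Prod.swap := by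
    rw [← Measure.compProd_map measurable_fst, ← Kernel.fst_eq, Kernel.fst_prod]
    rw [← Measure.fst_map_swap] at h₁
    exact (compProd_mono_left h₁ K₁).trans_eq (Measure.disintegrate _ _)
  have hYZ : T.map (Prod.map id Prod.snd) ≤ γ₂ := by
    rw [← Measure.compProd_map measurable_snd, ← Kernel.snd_eq, Kernel.snd_prod]
    exact (compProd_mono_left h₂ K₂).trans_eq (Measure.disintegrate _ _)
  refine ⟨T.map fun t => (t.2.1, t.1, t.2.2), ?_, ?_, ?_⟩
  · rw [Measure.map_map (by fun_prop) (by fun_prop)]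
    have hXY := Measure.map_mono hYX measurable_swap
    rw [Measure.map_map measurable_swap (by fun_prop),
      Measure.map_map measurable_swap measurable_swap, Prod.swap_swap_eq, Measure.map_id] at hXY
    exact hXY
  · rw [Measure.map_map (by fun_prop) (by fun_prop)]
    exact hYZ
  · rw [Measure.map_map (by fun_prop) (by fun_prop)]
    exact Measure.fst_compProd l (K₁ ×ₖ K₂)

end Measure

section PartialPlan

variable {X : Type*} [MeasurableSpace X] {μ ν κ : Measure X} {α β : ℝ}

theorem IsPartialPlan.isFiniteMeasure {γ : Measure (X × X)} (h : IsPartialPlan μ ν α γ) :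
    IsFiniteMeasure γ :=
  ⟨h.1 ▸ ENNReal.ofReal_lt_top⟩

theorem isPartialPlan_zero : IsPartialPlan μ ν 0 0 := by
  simp [IsPartialPlan, Measure.zero_le]

theorem exists_isPartialPlan [IsProbabilityMeasure μ] [IsProbabilityMeasure ν] (hα : α ≤ 1) :
    ∃ γ, IsPartialPlan μ ν α γ := by
  obtain ⟨γ, hγ, hmass⟩ := exists_le_measure_univ_eq (μ := μ.prod ν) (m := ENNReal.ofReal α)
    (by simpa using hα)
  refine ⟨γ, hmass, ?_, ?_⟩
  · simpa using Measure.map_mono hγ measurable_fst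
  · simpa using Measure.map_mono hγ measurable_snd

theorem IsPartialPlan.exists_glue [StandardBorelSpace X] [IsProbabilityMeasure κ]
    {γ₁ γ₂ : Measure (X × X)} (h₁ : IsPartialPlan μ κ α γ₁) (h₂ : IsPartialPlan κ ν β γ₂) :
    ∃ T : Measure (X × X × X), T.map (fun t => (t.1, t.2.1)) ≤ γ₁ ∧ T.map Prod.snd ≤ γ₂ ∧
      IsPartialPlan μ ν (α + β - 1) (T.map fun t => (t.1, t.2.2)) := by
  have : Nonempty X := nonempty_of_isProbabilityMeasure κ
  have := h₁.isFiniteMeasure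
  have := h₂.isFiniteMeasure
  obtain ⟨c, hc₁, hc₂, hc⟩ := exists_le_le_measure_univ_add_le h₁.2.2 h₂.2.1
  have : IsFiniteMeasure c := isFiniteMeasure_of_le _ hc₁
  have hmass : ENNReal.ofReal (α + β - 1) ≤ c Set.univ := by
    rw [ENNReal.ofReal_sub _ zero_le_one, ENNReal.ofReal_one, tsub_le_iff_right]
    refine ENNReal.ofReal_add_le.trans ?_
    rwa [← h₁.1, ← h₂.1, ← Measure.snd_univ, ← Measure.fst_univ (ρ := γ₂),
      ← measure_univ (μ := κ)]
  obtain ⟨l, hlc, hl⟩ := exists_le_measure_univ_eq hmass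
  obtain ⟨T, hT₁, hT₂, hTl⟩ := exists_glue_le (hlc.trans hc₁) (hlc.trans hc₂)
  refine ⟨T, hT₁, hT₂, ?_, ?_, ?_⟩
  · rw [← hl, ← hTl, Measure.map_apply (by fun_prop) .univ, Measure.map_apply (by fun_prop) .univ]
    rfl
  · have hfst := (Measure.map_mono hT₁ measurable_fst).trans h₁.2.1
    rw [Measure.map_map (by fun_prop) (by fun_prop)] at hfst ⊢
    exact hfst
  · have hsnd := (Measure.map_mono hT₂ measurable_snd).trans h₂.2.2
    rw [Measure.map_map (by fun_prop) (by fun_prop)] at hsnd ⊢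
    exact hsnd

end PartialPlan

section PlanCost

variable {X : Type*} [MetricSpace X] [MeasurableSpace X] {p : ℝ}

theorem planCost_nonneg (γ : Measure (X × X)) : 0 ≤ planCost p γ :=
  Real.rpow_nonneg (integral_nonneg fun _ => Real.rpow_nonneg dist_nonneg _) _

theorem planCost_zero_measure (hp : p ≠ 0) : planCost p (0 : Measure (X × X)) = 0 := by
  simp [planCost, hp]

variable [OpensMeasurableSpace X] [SecondCountableTopology X] [BoundedSpace X]

theorem memLp_dist (q : ENNReal) (γ : Measure (X × X)) [IsFiniteMeasure γ] :
    MemLp (fun z : X × X => dist z.1 z.2) q γ := by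
  refine MemLp.of_bound (by fun_prop) (Metric.diam (Set.univ : Set X)) (.of_forall fun z => ?_)
  rw [Real.norm_of_nonneg dist_nonneg]
  exact Metric.dist_le_diam_of_mem (Bornology.isBounded_univ.2 ‹_›) trivial trivial

theorem ofReal_planCost (hp : 0 < p) (γ : Measure (X × X)) [IsFiniteMeasure γ] :
    ENNReal.ofReal (planCost p γ) =
      eLpNorm (fun z : X × X => dist z.1 z.2) (ENNReal.ofReal p) γ := by
  rw [(memLp_dist _ γ).eLpNorm_eq_integral_rpow_norm (by simpa using hp) ENNReal.ofReal_ne_top]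
  simp [planCost, ENNReal.toReal_ofReal hp.le]

theorem planCost_mono (hp : 0 < p) {γ γ' : Measure (X × X)} [IsFiniteMeasure γ'] (h : γ ≤ γ') :
    planCost p γ ≤ planCost p γ' := by
  have : IsFiniteMeasure γ := isFiniteMeasure_of_le _ h
  rw [← ENNReal.ofReal_le_ofReal_iff (planCost_nonneg _), ofReal_planCost hp, ofReal_planCost hp]
  exact eLpNorm_mono_measure _ h

theorem planCost_map_le_add (hp : 1 ≤ p) (T : Measure (X × X × X)) [IsFiniteMeasure T] :
    planCost p (T.map fun t => (t.1, t.2.2)) ≤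
      planCost p (T.map fun t => (t.1, t.2.1)) + planCost p (T.map Prod.snd) := by
  have hp₀ : 0 < p := one_pos.trans_le hp
  rw [← ENNReal.ofReal_le_ofReal_iff (add_nonneg (planCost_nonneg _) (planCost_nonneg _)),
    ENNReal.ofReal_add (planCost_nonneg _) (planCost_nonneg _)]
  simp only [ofReal_planCost hp₀]
  rw [eLpNorm_map_measure (by fun_prop) (by fun_prop),
    eLpNorm_map_measure (by fun_prop) (by fun_prop),
    eLpNorm_map_measure (by fun_prop) (by fun_prop)]
  refine le_trans (eLpNorm_mono_real fun t => ?_) (eLpNorm_add_le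
    (Measurable.aestronglyMeasurable (by fun_prop))
    (Measurable.aestronglyMeasurable (by fun_prop)) (ENNReal.one_le_ofReal.2 hp))
  exact (Real.norm_of_nonneg dist_nonneg).trans_le (dist_triangle t.1 t.2.1 t.2.2)

end PlanCost

section PartialW

variable {X : Type*} [MetricSpace X] [MeasurableSpace X] {μ ν κ : Measure X} {p α β : ℝ}

theorem IsPartialPlan.partialW_le_planCost {γ : Measure (X × X)} (h : IsPartialPlan μ ν α γ) :
    partialW p α μ ν ≤ planCost p γ := by
  refine csInf_le ⟨0, ?_⟩ ⟨γ, h, rfl⟩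
  rintro _ ⟨γ', _, rfl⟩
  exact planCost_nonneg γ'

theorem exists_planCost_lt [IsProbabilityMeasure μ] [IsProbabilityMeasure ν] (hα : α ≤ 1) {c : ℝ}
    (hc : partialW p α μ ν < c) : ∃ γ, IsPartialPlan μ ν α γ ∧ planCost p γ < c := by
  obtain ⟨γ₀, hγ₀⟩ := exists_isPartialPlan (μ := μ) (ν := ν) hα
  have hne : {c : ℝ | ∃ γ, IsPartialPlan μ ν α γ ∧ c = planCost p γ}.Nonempty :=
    ⟨_, γ₀, hγ₀, rfl⟩
  obtain ⟨_, ⟨γ, hγ, rfl⟩, hlt⟩ := exists_lt_of_csInf_lt hne hc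
  exact ⟨γ, hγ, hlt⟩

theorem partialW_zero_nonpos (hp : p ≠ 0) : partialW p 0 μ ν ≤ 0 :=
  isPartialPlan_zero.partialW_le_planCost.trans_eq (planCost_zero_measure hp)

theorem partialW_triangle [StandardBorelSpace X] [OpensMeasurableSpace X]
    [SecondCountableTopology X] [BoundedSpace X]
    [IsProbabilityMeasure μ] [IsProbabilityMeasure ν] [IsProbabilityMeasure κ]
    (hp : 1 ≤ p) (hα : α ≤ 1) (hβ : β ≤ 1) :
    partialW p (α + β - 1) μ ν ≤ partialW p α μ κ + partialW p β κ ν := by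
  have hp₀ : 0 < p := one_pos.trans_le hp
  refine le_add_of_forall_lt fun a ha b hb => ?_
  obtain ⟨γ₁, h₁, hγ₁⟩ := exists_planCost_lt hα ha
  obtain ⟨γ₂, h₂, hγ₂⟩ := exists_planCost_lt hβ hb
  have := h₁.isFiniteMeasure
  have := h₂.isFiniteMeasure
  obtain ⟨T, hT₁, hT₂, hT⟩ := h₁.exists_glue h₂
  have : IsFiniteMeasure (T.map Prod.snd) := isFiniteMeasure_of_le _ hT₂
  have : IsFiniteMeasure T := Measure.isFiniteMeasure_of_map measurable_snd.aemeasurable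
  calc partialW p (α + β - 1) μ ν
      ≤ planCost p (T.map fun t => (t.1, t.2.2)) := hT.partialW_le_planCost
    _ ≤ planCost p (T.map fun t => (t.1, t.2.1)) + planCost p (T.map Prod.snd) :=
        planCost_map_le_add hp T
    _ ≤ planCost p γ₁ + planCost p γ₂ :=
        add_le_add (planCost_mono hp₀ hT₁) (planCost_mono hp₀ hT₂)
    _ ≤ a + b := add_le_add hγ₁.le hγ₂.le

end PartialW

section RPW

variable {X : Type*} [MetricSpace X] [MeasurableSpace X] {μ ν : Measure X} {p k ε : ℝ}

theorem RPW_le_of_partialW_le (hε : ε ∈ Set.Icc (0 : ℝ) 1) (h : partialW p (1 - ε) μ ν ≤ k * ε) :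
    RPW p k μ ν ≤ ε :=
  csInf_le ⟨0, fun _ hε' => hε'.1.1⟩ ⟨hε, h⟩

theorem RPW_le_one (hp : p ≠ 0) (hk : 0 ≤ k) : RPW p k μ ν ≤ 1 :=
  RPW_le_of_partialW_le (by simp) (by simpa using (partialW_zero_nonpos hp).trans hk)

theorem exists_partialW_le_of_RPW_lt (hp : p ≠ 0) (hk : 0 ≤ k) {c : ℝ} (hc : RPW p k μ ν < c) :
    ∃ ε ∈ Set.Icc (0 : ℝ) 1, partialW p (1 - ε) μ ν ≤ k * ε ∧ ε < c := by
  have hne : {ε : ℝ | ε ∈ Set.Icc (0 : ℝ) 1 ∧ partialW p (1 - ε) μ ν ≤ k * ε}.Nonempty :=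
    ⟨1, by simp, by simpa using (partialW_zero_nonpos hp).trans hk⟩
  obtain ⟨ε, ⟨hε, h⟩, hlt⟩ := exists_lt_of_csInf_lt hne hc
  exact ⟨ε, hε, h, hlt⟩

end RPW

theorem rpw_triangle_inequality_general
    {X : Type*} [MetricSpace X] [BoundedSpace X] [SecondCountableTopology X]
    [MeasurableSpace X] [OpensMeasurableSpace X] [StandardBorelSpace X]
    (μ ν κ : Measure X)
    [IsProbabilityMeasure μ] [IsProbabilityMeasure ν] [IsProbabilityMeasure κ]
    (p k : ℝ) (hp : 1 ≤ p) (hk : 0 ≤ k) :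
    RPW p k μ ν ≤ RPW p k μ κ + RPW p k κ ν := by
  have hp₀ : p ≠ 0 := (one_pos.trans_le hp).ne'
  refine le_add_of_forall_lt fun a ha b hb => ?_
  obtain ⟨ε₁, hε₁, h₁, hε₁a⟩ := exists_partialW_le_of_RPW_lt hp₀ hk ha
  obtain ⟨ε₂, hε₂, h₂, hε₂b⟩ := exists_partialW_le_of_RPW_lt hp₀ hk hb
  refine le_trans ?_ (add_le_add hε₁a.le hε₂b.le)
  rcases le_total 1 (ε₁ + ε₂) with h | h
  · exact (RPW_le_one hp₀ hk).trans h
  refine RPW_le_of_partialW_le ⟨add_nonneg hε₁.1 hε₂.1, h⟩ ?_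
  calc partialW p (1 - (ε₁ + ε₂)) μ ν
      = partialW p ((1 - ε₁) + (1 - ε₂) - 1) μ ν := by ring_nf
    _ ≤ partialW p (1 - ε₁) μ κ + partialW p (1 - ε₂) κ ν :=
        partialW_triangle hp (sub_le_self 1 hε₁.1) (sub_le_self 1 hε₂.1)
    _ ≤ k * ε₁ + k * ε₂ := add_le_add h₁ h₂
    _ = k * (ε₁ + ε₂) := (mul_add k ε₁ ε₂).symm

/-- For Borel probability measures `μ ν κ` on a compact metric space `X`
with unit diameter, `p ≥ 1`, `k ≥ 0`, the `(p,k)`-RPW distance satisfies the triangle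
inequality. -/
theorem rpw_triangle_inequality
    {X : Type*} [MetricSpace X] [CompactSpace X] [MeasurableSpace X] [BorelSpace X]
    (hdiam : ∀ a b : X, dist a b ≤ 1)
    (μ ν κ : Measure X)
    [IsProbabilityMeasure μ] [IsProbabilityMeasure ν] [IsProbabilityMeasure κ]
    (p k : ℝ) (hp : 1 ≤ p) (hk : 0 ≤ k) :
    RPW p k μ ν ≤ RPW p k μ κ + RPW p k κ ν :=
  rpw_triangle_inequality_general μ ν κ p k hp hk
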